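/- Let X be a proper, geodesic Ptolemy metric space and let K ⊂ X be a nonempty compact subset. Then there exists a unique closed ball B_r(p) of minimal radius containing K; that is, there exist a minimal r ≥ 0 and a point p with K ⊂ B_r(p), and the center p of such a minimal ball is unique. -/

import Mathlib

/-!
The Ptolemy inequality applied to `k, m, x, y`, with `m` a midpoint of `x, y`, makes distance
functions convex: `dist k m ≤ (dist k x + dist k y) / 2`. The heart of the proof is a rigidity
statement (`eq_of_flat`): if `k` has the same distance `r` to `m`, to `p` and to every midpoint of
`m, p`, then `m = p`. To see this, move from `m` towards `k` by a small amount `s`, to a point `z`,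
and let `w` be a midpoint of `z, p`. By properness `w` accumulates, as `s → 0`, at a midpoint `q`
of `m, p`, and `dist k q = r`. The Ptolemy inequality for `k, q, z, p`
bounds `dist z q` from below by `dist z p - (1 - s / r) * dist m p / 2`, better than the triangle
inequality by a term of order `s`, whereas the one for `z, q, m, w` bounds it from above with an
error of only `s * dist q w + O(s ^ 2) = o(s)`; the two are compatible only if `dist m p = 0`.

The rigidity statement first yields uniqueness of midpoints: all midpoints of two midpoints `u, v`
of `x, y` are, by convexity, midpoints of `x, y`, so they all have distance `dist x y / 2` to `x`.
If now `x ≠ y` were two centers of minimal balls, then by minimality some `k ∈ K` would have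
distance at least `r` to the midpoint of `x, y`, hence, by convexity, distance exactly `r` to
`x`, `y` and this unique midpoint, against rigidity. Existence of a minimal ball is compactness.
-/

/-- A metric space is Ptolemy if `|xy|·|uv| ≤ |xu|·|yv| + |xv|·|yu|` for all points. -/
def IsPtolemy (X : Type*) [MetricSpace X] : Prop :=
  ∀ x y u v : X, dist x y * dist u v ≤ dist x u * dist y v + dist x v * dist y u

/-- `c` is a geodesic on `I` (parameterized proportionally to arclength with speed `l ≥ 0`). -/
def IsGeodesicOn {X : Type*} [MetricSpace X] (c : ℝ → X) (I : Set ℝ) : Prop :=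
  ∃ l : ℝ, 0 ≤ l ∧ ∀ s ∈ I, ∀ t ∈ I, dist (c s) (c t) = l * |s - t|

/-- A metric space is geodesic if every pair of points is joined by a geodesic. -/
def IsGeodesicSpace (X : Type*) [MetricSpace X] : Prop :=
  ∀ x y : X, ∃ c : ℝ → X, c 0 = x ∧ c 1 = y ∧ IsGeodesicOn c (Set.Icc 0 1)

open Filter Topology

lemma exists_dist_eq_of_isGeodesicSpace {X : Type*} [MetricSpace X] (hgeo : IsGeodesicSpace X)
    (x y : X) {t : ℝ} (h0 : 0 ≤ t) (h1 : t ≤ 1) :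
    ∃ z, dist x z = t * dist x y ∧ dist z y = (1 - t) * dist x y := by
  obtain ⟨c, rfl, rfl, l, hl, hc⟩ := hgeo x y
  have m0 : (0 : ℝ) ∈ Set.Icc (0 : ℝ) 1 := by simp
  have m1 : (1 : ℝ) ∈ Set.Icc (0 : ℝ) 1 := by simp
  refine ⟨c t, ?_, ?_⟩
  · rw [hc 0 m0 t ⟨h0, h1⟩, hc 0 m0 1 m1, zero_sub, abs_neg, abs_of_nonneg h0]
    norm_num
    ring
  · rw [hc t ⟨h0, h1⟩ 1 m1, hc 0 m0 1 m1, abs_sub_comm, abs_of_nonneg (by linarith)]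
    norm_num
    ring

/-- `m` is a midpoint of `x` and `y`. -/
def IsMid {X : Type*} [MetricSpace X] (x y m : X) : Prop :=
  dist x m = dist x y / 2 ∧ dist m y = dist x y / 2

lemma exists_isMid {X : Type*} [MetricSpace X] (hgeo : IsGeodesicSpace X) (x y : X) :
    ∃ m, IsMid x y m := by
  obtain ⟨m, h1, h2⟩ := exists_dist_eq_of_isGeodesicSpace hgeo x y (t := 1 / 2)
    (by norm_num) (by norm_num)
  exact ⟨m, by linarith, by linarith⟩

/-- Distance functions in a Ptolemy space are midpoint convex. -/
lemma IsMid.dist_le {X : Type*} [MetricSpace X] (hpt : IsPtolemy X) {x y m : X}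
    (h : IsMid x y m) (k : X) : dist k m ≤ (dist k x + dist k y) / 2 := by
  obtain ⟨h1, h2⟩ := h
  rcases eq_or_ne x y with rfl | hxy
  · have : x = m := dist_eq_zero.1 (by simpa using h1)
    subst this
    linarith
  · have hp : 0 < dist x y := dist_pos.2 hxy
    have := hpt k m x y
    rw [dist_comm m x, h1, h2] at this
    refine le_of_mul_le_mul_right (this.trans_eq ?_) hp
    ring

/-- The quantitative step in `eq_of_flat`: `z` is the point at distance `s` from `m` on the way
to `k`, and `w` is a midpoint of `z, p`. -/
lemma flat_estimate {X : Type*} [MetricSpace X] (hpt : IsPtolemy X) {k m p q z w : X} {r s : ℝ}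
    (hr : 0 < r) (hs : 0 < s) (hp : dist k p = r) (hq : dist k q = r) (hmid : IsMid m p q)
    (hz : dist m z = s) (hzk : dist z k = r - s) (hw : IsMid z p w) :
    dist m p * (dist m p - s) / (4 * r) ≤ dist q w + s / 2 := by
  obtain ⟨hq1, hq2⟩ := hmid
  obtain ⟨hw1, hw2⟩ := hw
  have hl : 0 ≤ dist m p := dist_nonneg
  have ha1 : dist z p ≤ s + dist m p := by
    have := dist_triangle z m p
    rw [dist_comm z m, hz] at this
    exact this
  have ha2 : dist m p ≤ s + dist z p := by
    have := dist_triangle m z p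
    rwa [hz] at this
  have hmw : dist m p - dist z p / 2 ≤ dist m w := by
    have := dist_triangle m w p
    linarith
  have P1 := hpt k q z p
  rw [hq, hq2, hp, dist_comm k z, hzk, dist_comm q z] at P1
  have P2 := hpt z q m w
  rw [dist_comm z m, hz, hw1, dist_comm q m, hq1] at P2
  have hε : 0 ≤ dist q w := dist_nonneg
  generalize dist q w = ε at *
  generalize dist m p = l at *
  -- `a` is the first-order term: `|a| ≤ s`, and the claim compares terms of order `s`.
  obtain ⟨a, ha⟩ : ∃ a, dist z p = l + a := ⟨dist z p - l, by ring⟩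
  rw [ha] at ha1 ha2 hmw P1 P2
  have hg0 : 0 ≤ dist z q := dist_nonneg
  generalize dist z q = g at *
  generalize dist m w = d at *
  have haa : a ^ 2 ≤ s ^ 2 := by nlinarith
  have P2' : g * ((l - a) / 2) ≤ s * ε + (l + a) / 2 * (l / 2) := by
    have : g * ((l - a) / 2) ≤ g * d := mul_le_mul_of_nonneg_left (by linarith) hg0
    linarith
  rw [div_le_iff₀ (by positivity)]
  rcases le_or_gt l s with hls | hls
  · have : l * (l - s) ≤ 0 := mul_nonpos_of_nonneg_of_nonpos hl (by linarith)
    have : 0 ≤ (ε + s / 2) * (4 * r) := by positivity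
    linarith
  · have hla : 0 ≤ (l - a) / 2 := by linarith
    have P1' := mul_le_mul_of_nonneg_right P1 hla
    have P2'' := mul_le_mul_of_nonneg_left P2' hr.le
    have h3 : s * (l * (l - a)) ≤ s * ((ε + s / 2) * (4 * r)) := by
      have := mul_le_mul_of_nonneg_left haa hr.le
      nlinarith
    have h4 := le_of_mul_le_mul_left h3 hs
    have : l * (l - s) ≤ l * (l - a) := mul_le_mul_of_nonneg_left (by linarith) hl
    linarith

/-- A degenerate triangle, whose apex `k` has the same distance to both ends of the base and to
all midpoints of the base, has a base of length zero. -/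
lemma eq_of_flat {X : Type*} [MetricSpace X] [ProperSpace X] (hgeo : IsGeodesicSpace X)
    (hpt : IsPtolemy X) {k m p : X} {r : ℝ} (hm : dist k m = r) (hp : dist k p = r)
    (hq : ∀ q, IsMid m p q → dist k q = r) : m = p := by
  rcases (dist_nonneg.trans_eq hm).eq_or_lt with h0 | hr
  · rw [← h0, dist_eq_zero] at hm hp
    exact hm.symm.trans hp
  have ht (n : ℕ) : (0 : ℝ) < 1 / ((n : ℝ) + 1) := by positivity
  have ht1 (n : ℕ) : 1 / ((n : ℝ) + 1) ≤ 1 := by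
    rw [div_le_one (by positivity)]
    linarith [n.cast_nonneg (α := ℝ)]
  choose z hz1 hz2 using fun n : ℕ =>
    exists_dist_eq_of_isGeodesicSpace hgeo m k (ht n).le (ht1 n)
  choose w hw using fun n : ℕ => exists_isMid hgeo (z n) p
  rw [dist_comm m k, hm] at hz1 hz2
  set s : ℕ → ℝ := fun n => 1 / ((n : ℝ) + 1) * r with hsdef
  have hs0 : Tendsto s atTop (𝓝 0) := by
    simpa [hsdef] using (tendsto_one_div_add_atTop_nhds_zero_nat (𝕜 := ℝ)).mul_const r
  have hzm : Tendsto z atTop (𝓝 m) := by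
    rw [tendsto_iff_dist_tendsto_zero]
    refine hs0.congr fun n => ?_
    rw [dist_comm, hz1]
  have hwb (n : ℕ) : w n ∈ Metric.closedBall p ((r + dist m p) / 2) := by
    rw [Metric.mem_closedBall, (hw n).2]
    have h1 := dist_triangle (z n) m p
    rw [dist_comm (z n) m, hz1] at h1
    have h2 : 1 / ((n : ℝ) + 1) * r ≤ r := mul_le_of_le_one_left hr.le (ht1 n)
    linarith
  obtain ⟨q, -, φ, hφ, hφq⟩ := (isCompact_closedBall p _).tendsto_subseq hwb
  have hzφ : Tendsto (z ∘ φ) atTop (𝓝 m) := hzm.comp hφ.tendsto_atTop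
  have hsφ : Tendsto (s ∘ φ) atTop (𝓝 0) := hs0.comp hφ.tendsto_atTop
  have hG : Tendsto (fun n => dist (z (φ n)) p / 2) atTop (𝓝 (dist m p / 2)) :=
    (hzφ.dist tendsto_const_nhds).div_const 2
  have hmid : IsMid m p q := by
    constructor
    · exact tendsto_nhds_unique (hzφ.dist hφq) (hG.congr fun n => (hw (φ n)).1.symm)
    · exact tendsto_nhds_unique (hφq.dist tendsto_const_nhds)
        (hG.congr fun n => (hw (φ n)).2.symm)
  have est (n : ℕ) : dist m p * (dist m p - s (φ n)) / (4 * r)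
      ≤ dist q (w (φ n)) + s (φ n) / 2 := by
    refine flat_estimate hpt hr (mul_pos (ht _) hr) hp (hq q hmid) hmid (hz1 _) ?_ (hw _)
    rw [hz2]
    simp only [hsdef]
    ring
  have lim1 : Tendsto (fun n => dist m p * (dist m p - s (φ n)) / (4 * r)) atTop
      (𝓝 (dist m p * (dist m p - 0) / (4 * r))) :=
    ((tendsto_const_nhds.sub hsφ).const_mul _).div_const _
  have lim2 : Tendsto (fun n => dist q (w (φ n)) + s (φ n) / 2) atTop
      (𝓝 (dist q q + 0 / 2)) :=
    (tendsto_const_nhds.dist hφq).add (hsφ.div_const 2)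
  have key := le_of_tendsto_of_tendsto' lim1 lim2 est
  rw [dist_self, sub_zero, zero_div, add_zero, div_le_iff₀ (by positivity), zero_mul] at key
  exact dist_eq_zero.1 (mul_self_eq_zero.1 (le_antisymm key (mul_self_nonneg _)))

lemma IsMid.unique {X : Type*} [MetricSpace X] [ProperSpace X] (hgeo : IsGeodesicSpace X)
    (hpt : IsPtolemy X) {x y u v : X} (hu : IsMid x y u) (hv : IsMid x y v) : u = v := by
  refine eq_of_flat hgeo hpt hu.1 hv.1 fun q hq => ?_
  have h1 := hq.dist_le hpt x
  have h2 := hq.dist_le hpt y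
  rw [dist_comm y u, dist_comm y v, hu.2, hv.2, dist_comm y q] at h2
  rw [hu.1, hv.1] at h1
  have := dist_triangle x q y
  linarith

lemma exists_minimal_closedBall {X : Type*} [MetricSpace X] [ProperSpace X]
    (K : Set X) (hK : IsCompact K) (hKne : K.Nonempty) :
    ∃ (r : ℝ) (p : X), 0 ≤ r ∧ K ⊆ Metric.closedBall p r ∧
      ∀ (r' : ℝ) (p' : X), K ⊆ Metric.closedBall p' r' → r ≤ r' := by
  obtain ⟨x, hx⟩ := hKne
  obtain ⟨R, hR⟩ := hK.isBounded.subset_closedBall x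
  have hR0 : 0 ≤ R := dist_nonneg.trans (hR hx)
  have hcl : IsClosed {a : X × ℝ | K ⊆ Metric.closedBall a.1 a.2} := by
    have : {a : X × ℝ | K ⊆ Metric.closedBall a.1 a.2} =
        ⋂ k ∈ K, {a : X × ℝ | dist k a.1 ≤ a.2} := by
      ext a
      simp [Set.subset_def]
    rw [this]
    exact isClosed_biInter fun k _ => isClosed_le (by fun_prop) (by fun_prop)
  have hT := ((isCompact_closedBall x R).prod (isCompact_Icc (a := (0 : ℝ)) (b := R))).inter_right
    hcl
  obtain ⟨⟨p, r⟩, ⟨⟨-, hr⟩, hpK⟩, hmin⟩ := hT.exists_isMinOn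
    ⟨(x, R), ⟨⟨by simpa using hR0, by simpa using hR0⟩, hR⟩⟩ continuous_snd.continuousOn
  refine ⟨r, p, hr.1, hpK, fun r' p' h => ?_⟩
  rcases le_total r' R with hle | hle
  · have hd := h hx
    refine hmin (a := (p', r')) ⟨⟨?_, dist_nonneg.trans hd, hle⟩, h⟩
    rw [Metric.mem_closedBall, dist_comm]
    exact hd.trans hle
  · exact hr.2.trans hle

/-- **Corollary 2.4.** In a proper geodesic Ptolemy metric space, every nonempty compact
subset `K` is contained in a unique closed ball of minimal radius: there are a minimal
radius `r ≥ 0` and a center `p` with `K ⊆ B_r(p)`, and the center of such a minimal ball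
is unique. -/
theorem unique_minimal_enclosing_ball_of_proper_geodesic_ptolemy
    {X : Type*} [MetricSpace X] [ProperSpace X]
    (hgeo : IsGeodesicSpace X) (hpt : IsPtolemy X)
    (K : Set X) (hK : IsCompact K) (hKne : K.Nonempty) :
    ∃ (r : ℝ) (p : X), 0 ≤ r ∧ K ⊆ Metric.closedBall p r ∧
      (∀ (r' : ℝ) (p' : X), K ⊆ Metric.closedBall p' r' → r ≤ r') ∧
      (∀ p' : X, K ⊆ Metric.closedBall p' r → p' = p) := by
  obtain ⟨r, p, hr, hp, hmin⟩ := exists_minimal_closedBall K hK hKne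
  refine ⟨r, p, hr, hp, hmin, fun p' hp' => ?_⟩
  obtain ⟨m, hm⟩ : ∃ m, IsMid p' p m := exists_isMid hgeo _ _
  -- `k` is a point of `K` farthest from `m`, so `r ≤ dist k m` by minimality of `r`.
  obtain ⟨k, hk, hkmax⟩ := hK.exists_isMaxOn hKne
    (continuous_id.dist (continuous_const (y := m))).continuousOn
  have h1 : r ≤ dist k m := hmin _ m fun x hx => hkmax hx
  have h2 := hm.dist_le hpt k
  have h3 : dist k p' ≤ r := hp' hk
  have h4 : dist k p ≤ r := hp hk
  refine eq_of_flat hgeo hpt (k := k) (r := r) (by linarith) (by linarith) fun q hq => ?_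
  rw [hq.unique hgeo hpt hm]
  linarith
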